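/- arXiv:0807.4405 — 5 statements merged into one kernel-verified Lean document; each statement's English description precedes it below -/
import Mathlib

section
/- Let V be a finite-dimensional real inner product space, β ∈ ℝ, λ, v ∈ V, and let u : V → V be a self-adjoint linear map. Then ⟪u, S_λ(v)⟫_β = ⟨2(u(λ) − β·(tr u)·λ), v⟩. In other words, the adjoint of the symbol map v ↦ S_λ(v) with respect to the pairing ⟪·,·⟫_β on self-adjoint endomorphisms and the inner product on V is u ↦ 2(u(λ) − β (tr u) λ). -/
/-!
The symbol `S_λ(v)` is the sum of the two rank-one operators `⟨λ,·⟩ v` and `⟨v,·⟩ λ`, and the trace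
of a rank-one operator `f(·) x` is `f x`. Composing with an arbitrary endomorphism `a` on the left
only replaces `x` by `a x`, so `tr (a ∘ S_λ(v)) = ⟨λ, a v⟩ + ⟨v, a λ⟩`. Taking `a = u` and `a = id`
gives both traces in the pairing, and the symmetry of `u` merges the two terms of the first one.
-/

open scoped RealInnerProductSpace

/-- The symbol operator `S_λ(v) : V → V`, `w ↦ ⟨λ,w⟩ v + ⟨v,w⟩ λ`. -/
noncomputable def symOp {V : Type*} [NormedAddCommGroup V] [InnerProductSpace ℝ V]
    (l v : V) : V →ₗ[ℝ] V where
  toFun w := ⟪l, w⟫ • v + ⟪v, w⟫ • l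
  map_add' a b := by simp only [inner_add_right, add_smul]; abel
  map_smul' c a := by simp [inner_smul_right, smul_add, smul_smul]

/-- The DeWitt-family pairing `⟪u,w⟫_β := tr(u∘w) − β (tr u)(tr w)` on endomorphisms of `V`,
corresponding to the supermetric `G_β^{abcd} = g^{ac}g^{bd} − β g^{ab}g^{cd}`. -/
noncomputable def dewittPairing {V : Type*} [NormedAddCommGroup V] [InnerProductSpace ℝ V]
    (β : ℝ) (u w : V →ₗ[ℝ] V) : ℝ :=
  LinearMap.trace ℝ V (u ∘ₗ w) - β * (LinearMap.trace ℝ V u) * (LinearMap.trace ℝ V w)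

theorem trace_comp_symOp {V : Type*} [NormedAddCommGroup V] [InnerProductSpace ℝ V]
    [FiniteDimensional ℝ V] (l v : V) (a : V →ₗ[ℝ] V) :
    LinearMap.trace ℝ V (a ∘ₗ symOp l v) = ⟪l, a v⟫ + ⟪v, a l⟫ := by
  have h : a ∘ₗ symOp l v =
      (innerₛₗ ℝ l).smulRight (a v) + (innerₛₗ ℝ v).smulRight (a l) := by
    ext w
    simp [symOp]
  rw [h, map_add, LinearMap.trace_smulRight, LinearMap.trace_smulRight]
  simp

/-- the adjoint of the symbol map with respect to the DeWitt pairing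
is `u ↦ 2(u(λ) − β (tr u) λ)`. -/
theorem adjoint_symbol {V : Type*} [NormedAddCommGroup V] [InnerProductSpace ℝ V]
    [FiniteDimensional ℝ V] (β : ℝ) (l v : V) (u : V →ₗ[ℝ] V)
    (hu : LinearMap.IsSymmetric u) :
    dewittPairing β u (symOp l v) =
      ⟪(2 : ℝ) • (u l - (β * LinearMap.trace ℝ V u) • l), v⟫ := by
  have h_id : LinearMap.trace ℝ V (symOp l v) = ⟪l, v⟫ + ⟪v, l⟫ := by
    simpa using trace_comp_symOp l v LinearMap.id
  rw [dewittPairing, trace_comp_symOp, h_id, ← hu l v, real_inner_comm (u l) v,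
    real_inner_comm l v, real_inner_smul_left, inner_sub_left, real_inner_smul_left]
  ring
end

section
/- Let V be a finite-dimensional real inner product space, β ∈ ℝ with β ≠ 1, and λ ∈ V with λ ≠ 0. If v ∈ V and the endomorphism u := S_λ(v) satisfies u(λ) − β·(tr u)·λ = 0 (i.e., u lies in the kernel of the adjoint symbol for the pairing ⟪·,·⟫_β), then v = 0, and hence u = 0. In other words, for β ≠ 1 the kernel of the adjoint symbol σ*_λ intersects the image of the symbol σ_λ only in zero. -/
/-!
Since `tr S_λ(v) = 2⟨λ,v⟩` (`trace_symOp`), the kernel condition reads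
`⟨λ,λ⟩ v + (1 - 2β)⟨λ,v⟩ λ = 0`. Pairing it with `λ` gives `2(1 - β)⟨λ,λ⟩⟨λ,v⟩ = 0`, so
`⟨λ,v⟩ = 0` because `β ≠ 1` and `λ ≠ 0`; the condition then reduces to `⟨λ,λ⟩ v = 0`.
-/

open scoped RealInnerProductSpace

/-- `S_λ(v)` is the sum of the rank-one operators `v ⊗ λ` and `λ ⊗ v`, each of trace `⟨λ,v⟩`. -/
lemma trace_symOp {V : Type*} [NormedAddCommGroup V] [InnerProductSpace ℝ V]
    [FiniteDimensional ℝ V] (l v : V) :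
    LinearMap.trace ℝ V (symOp l v) = 2 * ⟪l, v⟫ := by
  have key : symOp l v = (InnerProductSpace.rankOne ℝ v l : V →L[ℝ] V).toLinearMap
      + (InnerProductSpace.rankOne ℝ l v : V →L[ℝ] V).toLinearMap := by
    ext w
    simp [symOp]
  rw [key, map_add, InnerProductSpace.trace_rankOne, InnerProductSpace.trace_rankOne,
    real_inner_comm l v]
  ring

/-- for `β ≠ 1` and `λ ≠ 0`, if `u := S_λ(v)` lies in the kernel of the
adjoint symbol `u ↦ 2(u(λ) − β (tr u) λ)`, then `v = 0` and hence `u = 0`: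
the kernel of the adjoint symbol meets the image of the symbol only in zero. -/
theorem ker_adjoint_symbol_inter_image {V : Type*} [NormedAddCommGroup V]
    [InnerProductSpace ℝ V] [FiniteDimensional ℝ V] (β : ℝ) (hβ : β ≠ 1)
    (l : V) (hl : l ≠ 0) (v : V)
    (h : (symOp l v) l - (β * LinearMap.trace ℝ V (symOp l v)) • l = 0) :
    v = 0 ∧ symOp l v = 0 := by
  have hll : ⟪l, l⟫ ≠ 0 := inner_self_ne_zero.mpr hl
  rw [trace_symOp] at h
  change ⟪l, l⟫ • v + ⟪v, l⟫ • l - (β * (2 * ⟪l, v⟫)) • l = 0 at h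
  rw [real_inner_comm l v] at h
  have h1 := congrArg (fun x => ⟪l, x⟫) h
  simp only [inner_sub_right, inner_add_right, inner_smul_right, inner_zero_right] at h1
  have h2 : (1 - β) * (⟪l, l⟫ * ⟪l, v⟫) = 0 := by linear_combination h1 / 2
  have hlv : ⟪l, v⟫ = 0 := by
    simpa [hll, sub_ne_zero.mpr hβ.symm, hl] using h2
  have hv : v = 0 := by
    simpa [hlv, hl] using h
  refine ⟨hv, ?_⟩
  ext w
  simp [symOp, hv]
end

section
/- Let V be a finite-dimensional real inner product space and λ ∈ V with λ ≠ 0. For β = 1 (the DeWitt case), the endomorphism u := S_λ(λ) is nonzero and satisfies u(λ) − (tr u)·λ = 0. Hence for β = 1 the image of the symbol σ_λ has a nonzero intersection with the kernel of the adjoint symbol σ*_λ, i.e., the orthogonality construction degenerates exactly at β = 1. -/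
open scoped RealInnerProductSpace

/-- at `β = 1` (the DeWitt case) the endomorphism `u := S_λ(λ)` is a nonzero
element of the image of the symbol lying in the kernel of the adjoint symbol
`u ↦ 2(u(λ) − (tr u) λ)`: the orthogonality construction degenerates exactly at `β = 1`. -/
theorem dewitt_degenerate {V : Type*} [NormedAddCommGroup V] [InnerProductSpace ℝ V]
    [FiniteDimensional ℝ V] (l : V) (hl : l ≠ 0) :
    symOp l l ≠ 0 ∧ (symOp l l) l - (LinearMap.trace ℝ V (symOp l l)) • l = 0 := by
  -- `S_λ(λ)` is the rank-one map `w ↦ 2⟨λ,w⟩ λ`, so `LinearMap.trace_smulRight` gives its trace.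
  have h : symOp l l = ((2 : ℝ) • innerₗ V l).smulRight l := by
    ext w
    simp [symOp, two_mul, add_smul]
  have htr : LinearMap.trace ℝ V (symOp l l) = 2 * ⟪l, l⟫ := by
    rw [h, LinearMap.trace_smulRight]
    simp
  have happ : symOp l l l = (2 * ⟪l, l⟫) • l := by
    simp [h]
  refine ⟨fun h0 => ?_, by rw [htr, happ, sub_self]⟩
  rw [h0, LinearMap.zero_apply, eq_comm, smul_eq_zero] at happ
  simp [hl] at happ
end

section
/- Let V be a real inner product space of dimension 3 and λ ∈ V with λ ≠ 0. If c ∈ ℝ and v ∈ V are such that c·id_V + S_λ(v) = 0 (as a linear map V → V), then c = 0 and v = 0. That is, the symbol σ_λ(v,c) = c g_{ab} + λ_{(a}v_{b)} of the conformal orbit map is injective. -/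
/-! The value `S_l(v) w` depends only on `⟪l, w⟫` and `⟪v, w⟫`, so in dimension 3 the operator kills
a nonzero vector `w` orthogonal to both `l` and `v`; evaluating `c • id + S_l(v) = 0` at `w` gives `c = 0`. Evaluating
`S_l(v) = 0` at `l` then gives `⟪l, l⟫ • v + ⟪v, l⟫ • l = 0`. Pairing this with `l` shows
`⟪v, l⟫ = 0`, and hence `v = 0`. -/

open scoped RealInnerProductSpace

/-- in dimension 3, for `λ ≠ 0`, the symbol
`(v, c) ↦ c·id_V + S_λ(v)` of the conformal orbit map is injective. -/
theorem conformal_symbol_injective {V : Type*} [NormedAddCommGroup V]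
    [InnerProductSpace ℝ V] [FiniteDimensional ℝ V]
    (hdim : Module.finrank ℝ V = 3) (l : V) (hl : l ≠ 0) (c : ℝ) (v : V)
    (h : c • (LinearMap.id : V →ₗ[ℝ] V) + symOp l v = 0) :
    c = 0 ∧ v = 0 := by
  -- a nonzero `w` orthogonal to both `l` and `v`, available since `dim V = 3 > 2`
  obtain ⟨w, hw0, hlw, hvw⟩ : ∃ w : V, w ≠ 0 ∧ ⟪l, w⟫ = 0 ∧ ⟪v, w⟫ = 0 := by
    have hne : (Submodule.span ℝ (Set.range ![l, v]))ᗮ ≠ ⊥ := by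
      intro hbot
      have hle : (Set.range ![l, v]).finrank ℝ ≤ 2 := by
        simpa using finrank_range_le_card (R := ℝ) ![l, v]
      rw [Set.finrank, Submodule.orthogonal_eq_bot_iff.mp hbot, finrank_top, hdim] at hle
      omega
    obtain ⟨w, hw, hw0⟩ := Submodule.exists_mem_ne_zero_of_ne_bot hne
    rw [Submodule.mem_orthogonal] at hw
    exact ⟨w, hw0, hw l (Submodule.subset_span ⟨0, rfl⟩),
      hw v (Submodule.subset_span ⟨1, rfl⟩)⟩
  have happ (x : V) : c • x + (⟪l, x⟫ • v + ⟪v, x⟫ • l) = 0 := LinearMap.congr_fun h x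
  have hc : c = 0 := by
    have hcw := happ w
    rw [hlw, hvw, zero_smul, zero_smul, add_zero, add_zero] at hcw
    exact (smul_eq_zero.mp hcw).resolve_right hw0
  have hll : ⟪l, l⟫ ≠ 0 := inner_self_ne_zero.mpr hl
  have hl' := happ l
  rw [hc, zero_smul, zero_add] at hl'
  have hvl : ⟪v, l⟫ = 0 := by
    -- pairing `⟪l, l⟫ • v + ⟪v, l⟫ • l = 0` with `l` gives `2 ⟪l, l⟫ ⟪v, l⟫ = 0`
    have hpair := congrArg (fun x => ⟪x, l⟫) hl'
    simp only [inner_add_left, real_inner_smul_left, inner_zero_left] at hpair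
    exact (mul_eq_zero.mp (by linarith : ⟪l, l⟫ * ⟪v, l⟫ = 0)).resolve_left hll
  rw [hvl, zero_smul, add_zero] at hl'
  exact ⟨hc, (smul_eq_zero.mp hl').resolve_left hll⟩
end

section
/- Let V be a real inner product space of dimension 3, β ∈ ℝ with β ≠ 1/3, and λ ∈ V with λ ≠ 0. If c ∈ ℝ and v ∈ V are such that the endomorphism u := c·id_V + S_λ(v) satisfies u(λ) − β·(tr u)·λ = 0 and (1 − 3β)·(tr u) = 0, then c = 0 and v = 0. That is, for β ≠ 1/3 the kernel of the adjoint conformal symbol σ*_λ intersects the image of the conformal symbol σ_λ only in zero, so the operator τ*∘τ for the conformal group has invertible symbol. -/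
/-! Since `β ≠ 1/3`, the second condition forces `tr u = 0`. The trace of `S_λ(v)` is `2⟨λ,v⟩`
(`trace_symOp`), so in dimension 3 this reads `3c + 2⟨λ,v⟩ = 0`. The first condition then becomes
`u(λ) = 0`, and pairing it with `λ ≠ 0` gives `c + 2⟨λ,v⟩ = 0`. Hence `c = ⟨λ,v⟩ = 0`, after which
`u(λ) = ‖λ‖² v` and so `v = 0`. -/

open scoped RealInnerProductSpace

/-- in dimension 3, for `β ≠ 1/3` and `λ ≠ 0`, if the endomorphism
`u := c·id_V + S_λ(v)` (a general element of the image of the conformal symbol) lies in the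
kernel of the adjoint conformal symbol `u ↦ (2(u(λ) − β (tr u) λ), (1 − 3β) tr u)`, then
`c = 0` and `v = 0`: the operator `τ*∘τ` for the conformal group has invertible symbol. -/
theorem conformal_ker_adjoint_inter_image {V : Type*} [NormedAddCommGroup V]
    [InnerProductSpace ℝ V] [FiniteDimensional ℝ V]
    (hdim : Module.finrank ℝ V = 3) (β : ℝ) (hβ : β ≠ 1 / 3)
    (l : V) (hl : l ≠ 0) (c : ℝ) (v : V)
    (h1 : (c • (LinearMap.id : V →ₗ[ℝ] V) + symOp l v) l
            - (β * LinearMap.trace ℝ V (c • (LinearMap.id : V →ₗ[ℝ] V) + symOp l v)) • l = 0)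
    (h2 : (1 - 3 * β) * LinearMap.trace ℝ V (c • (LinearMap.id : V →ₗ[ℝ] V) + symOp l v) = 0) :
    c = 0 ∧ v = 0 := by
  have htr : LinearMap.trace ℝ V (c • (LinearMap.id : V →ₗ[ℝ] V) + symOp l v) = 0 :=
    (mul_eq_zero.mp h2).resolve_left fun h => hβ (by linarith)
  have hu : c • l + (⟪l, l⟫ • v + ⟪v, l⟫ • l) = 0 := by
    rw [htr, mul_zero, zero_smul, sub_zero] at h1
    exact h1
  rw [map_add, map_smul, LinearMap.trace_id, hdim, trace_symOp, smul_eq_mul] at htr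
  push_cast at htr
  have hll : ⟪l, l⟫ ≠ 0 := inner_self_ne_zero.mpr hl
  have hpair : ⟪l, l⟫ * (c + 2 * ⟪l, v⟫) = 0 := by
    have h := congrArg (fun x => ⟪l, x⟫) hu
    simp only [inner_add_right, inner_smul_right, inner_zero_right, real_inner_comm l v] at h
    linarith
  have hc2 := (mul_eq_zero.mp hpair).resolve_left hll
  have hc : c = 0 := by linarith
  have hlv : ⟪v, l⟫ = 0 := by rw [real_inner_comm]; linarith
  rw [hc, hlv, zero_smul, zero_add, add_zero] at hu
  exact ⟨hc, (smul_eq_zero.mp hu).resolve_left hll⟩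
end
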